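/- For any extended logic program Π and any answer set X of Π, it holds that X = ∪_{i≥0} T^i_{Π,X}(∅), where T_{Π,X} is the extended immediate consequence operator with context X. -/

import Mathlib

open scoped Classical

/-- A literal: an atom `A` or its classical negation `¬A`. -/
inductive Lit (α : Type) : Type
  | pos : α → Lit α
  | neg : α → Lit α

/-- A rule with a head literal and finite positive and negative bodies. -/
structure Rule (α : Type) where
  head : Lit α
  pbody : Finset (Lit α)
  nbody : Finset (Lit α)

/-- A program is a set of rules (finiteness is stated as a hypothesis). -/
abbrev Program (α : Type) := Set (Rule α)

/-- `X` is consistent if it contains no complementary pair. -/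
def Consistent {α : Type} (X : Set (Lit α)) : Prop :=
  ¬ ∃ A : α, Lit.pos A ∈ X ∧ Lit.neg A ∈ X

/-- `X` is logically closed if it is consistent or equals the set of all literals. -/
def LogClosed {α : Type} (X : Set (Lit α)) : Prop :=
  Consistent X ∨ X = Set.univ

/-- `X` is closed under (basic) program `P`. -/
def ClosedUnder {α : Type} (P : Program α) (X : Set (Lit α)) : Prop :=
  ∀ r ∈ P, ↑r.pbody ⊆ X → r.head ∈ X

/-- `Cn P` : the smallest logically closed set closed under basic program `P`. -/
def Cn {α : Type} (P : Program α) : Set (Lit α) :=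
  ⋂₀ {X | LogClosed X ∧ ClosedUnder P X}

/-- The reduct of `P` relative to `X`. -/
def reduct {α : Type} (P : Program α) (X : Set (Lit α)) : Program α :=
  {s | ∃ r ∈ P, (↑r.nbody ∩ X = (∅ : Set (Lit α))) ∧ s = ⟨r.head, r.pbody, ∅⟩}

/-- A program is basic if all its rules have empty negative body. -/
def IsBasic {α : Type} (P : Program α) : Prop := ∀ r ∈ P, r.nbody = ∅

/-- `C_Π(X) = Cn(Π^X)`. -/
noncomputable def Cop {α : Type} (P : Program α) (X : Set (Lit α)) : Set (Lit α) :=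
  Cn (reduct P X)

/-- `A_Π(X) = C_Π(C_Π(X))`. -/
noncomputable def Aop {α : Type} (P : Program α) (X : Set (Lit α)) : Set (Lit α) :=
  Cop P (Cop P X)

/-- `X` is an answer set of `P` iff `Cn(P^X) = X`. -/
def AnswerSet {α : Type} (P : Program α) (X : Set (Lit α)) : Prop :=
  Cn (reduct P X) = X

/-- Immediate consequence operator for a basic program. -/
noncomputable def T {α : Type} (P : Program α) (X : Set (Lit α)) : Set (Lit α) :=
  if Consistent X then {L | ∃ r ∈ P, ↑r.pbody ⊆ X ∧ L = r.head} else Set.univ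

/-- `r` is active wrt `(X, Y)`. -/
def Active {α : Type} (r : Rule α) (X Y : Set (Lit α)) : Prop :=
  ↑r.pbody ⊆ X ∧ ↑r.nbody ∩ Y = (∅ : Set (Lit α))

/-- Extended immediate consequence operator `T_{Π,Y}(X)`. -/
noncomputable def TE {α : Type} (P : Program α) (Y X : Set (Lit α)) : Set (Lit α) :=
  if Consistent X then {L | ∃ r ∈ P, Active r X Y ∧ L = r.head} else Set.univ

/-- Preference-sensitive operator `T_{(Π,<),Y}(X)` (Definition 1). -/
noncomputable def TP {α : Type} (P : Program α) (lt : Rule α → Rule α → Prop)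
    (Y X : Set (Lit α)) : Set (Lit α) :=
  if Consistent X then
    {L | ∃ r ∈ P, Active r X Y ∧
      (¬ ∃ r' ∈ P, lt r r' ∧ Active r' Y X ∧ r'.head ∉ X) ∧ L = r.head}
  else Set.univ

/-- `C_{(Π,<)}(X)` (Definition 2). -/
noncomputable def CP {α : Type} (P : Program α) (lt : Rule α → Rule α → Prop)
    (X : Set (Lit α)) : Set (Lit α) :=
  ⋃ i : ℕ, (TP P lt X)^[i] ∅

/-- `A_{(Π,<)}(X) = C_{(Π,<)}(C_{(Π,<)}(X))`. -/
noncomputable def AP {α : Type} (P : Program α) (lt : Rule α → Rule α → Prop)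
    (X : Set (Lit α)) : Set (Lit α) :=
  CP P lt (CP P lt X)

/-- The set `D^r_{(X,Y)}` of removable literals. -/
def D {α : Type} (P : Program α) (lt : Rule α → Rule α → Prop) (r : Rule α)
    (X Y : Set (Lit α)) : Set (Lit α) :=
  {L | ∀ r' ∈ P, r'.head = L → ↑r'.pbody ⊆ Y →
      lt r' r ∧ ({r.head} ∪ X) ∩ ↑r'.nbody ≠ (∅ : Set (Lit α))}

/-- `T°_{(Π,<),Y}(X)` (Definition 3). -/
noncomputable def TN {α : Type} (P : Program α) (lt : Rule α → Rule α → Prop)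
    (Y X : Set (Lit α)) : Set (Lit α) :=
  if Consistent X then
    {L | ∃ r ∈ P, Active r X (Y \ D P lt r X Y) ∧ L = r.head}
  else Set.univ

/-- `C°_{(Π,<)}(X)` (Definition 4). -/
noncomputable def CN {α : Type} (P : Program α) (lt : Rule α → Rule α → Prop)
    (X : Set (Lit α)) : Set (Lit α) :=
  ⋃ i : ℕ, (TN P lt X)^[i] ∅

/-- `A°_{(Π,<)}(X) = C°_{(Π,<)}(C_Π(X))`. -/
noncomputable def AN {α : Type} (P : Program α) (lt : Rule α → Rule α → Prop)
    (X : Set (Lit α)) : Set (Lit α) :=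
  CN P lt (Cop P X)

/-!
A set is logically closed and closed under a basic program `Π` exactly when it is a prefixed point
of the immediate consequence operator `T Π`, so `Cn Π` is the least fixed point of `T Π`. Rule
bodies and complementary pairs are finite, so `T Π` commutes with directed unions, and Kleene's
theorem yields `Cn Π` as the union of the iterates of `T Π` on `∅`. The extended
operator of `Π` with context `Y` is the immediate consequence operator of the reduct `Π^Y`.
-/

variable {α : Type} {X Y : Set (Lit α)}

theorem Consistent.mono (hXY : X ⊆ Y) (hY : Consistent Y) : Consistent X :=
  fun ⟨A, hpos, hneg⟩ => hY ⟨A, hXY hpos, hXY hneg⟩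

theorem consistent_iUnion_of_directed {ι : Sort*} {s : ι → Set (Lit α)}
    (hs : Directed (· ⊆ ·) s) (hcons : ∀ i, Consistent (s i)) : Consistent (⋃ i, s i) := by
  rintro ⟨A, hpos, hneg⟩
  obtain ⟨i, hi⟩ := Set.mem_iUnion.mp hpos
  obtain ⟨j, hj⟩ := Set.mem_iUnion.mp hneg
  obtain ⟨k, hik, hjk⟩ := hs i j
  exact hcons k ⟨A, hik hi, hjk hj⟩

section ImmediateConsequence

variable {P : Program α}

theorem mem_T_iff_of_consistent (hX : Consistent X) {L : Lit α} :
    L ∈ T P X ↔ ∃ r ∈ P, ↑r.pbody ⊆ X ∧ L = r.head := by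
  rw [T, if_pos hX]
  rfl

theorem T_eq_univ_of_not_consistent (hX : ¬ Consistent X) : T P X = Set.univ :=
  if_neg hX

theorem head_mem_T {r : Rule α} (hr : r ∈ P) (hbody : ↑r.pbody ⊆ X) : r.head ∈ T P X := by
  by_cases hX : Consistent X
  · exact (mem_T_iff_of_consistent hX).mpr ⟨r, hr, hbody, rfl⟩
  · simp only [T_eq_univ_of_not_consistent hX, Set.mem_univ]

theorem monotone_T : Monotone (T P) := by
  intro X Y hXY L hL
  by_cases hY : Consistent Y
  · obtain ⟨r, hr, hbody, rfl⟩ := (mem_T_iff_of_consistent (hY.mono hXY)).mp hL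
    exact head_mem_T hr (hbody.trans hXY)
  · simp only [T_eq_univ_of_not_consistent hY, Set.mem_univ]

theorem T_subset_self_iff : T P X ⊆ X ↔ LogClosed X ∧ ClosedUnder P X := by
  constructor
  · intro hT
    refine ⟨?_, fun r hr hbody => hT (head_mem_T hr hbody)⟩
    by_cases hX : Consistent X
    · exact Or.inl hX
    · exact Or.inr (Set.univ_subset_iff.mp (T_eq_univ_of_not_consistent hX ▸ hT))
  · rintro ⟨hX | rfl, hclosed⟩
    · intro L hL
      obtain ⟨r, hr, hbody, rfl⟩ := (mem_T_iff_of_consistent hX).mp hL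
      exact hclosed r hr hbody
    · exact Set.subset_univ _

theorem T_iUnion_of_directed {ι : Type*} [Nonempty ι] {s : ι → Set (Lit α)}
    (hs : Directed (· ⊆ ·) s) : T P (⋃ i, s i) = ⋃ i, T P (s i) := by
  refine Set.Subset.antisymm ?_ (Set.iUnion_subset fun i => monotone_T (Set.subset_iUnion s i))
  by_cases hcons : ∀ i, Consistent (s i)
  · intro L hL
    obtain ⟨r, hr, hbody, rfl⟩ :=
      (mem_T_iff_of_consistent (consistent_iUnion_of_directed hs hcons)).mp hL
    obtain ⟨i, hi⟩ := hs.exists_mem_subset_of_finset_subset_biUnion hbody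
    exact Set.mem_iUnion_of_mem i (head_mem_T hr hi)
  · obtain ⟨i, hi⟩ := not_forall.mp hcons
    exact Set.subset_iUnion_of_subset i
      (T_eq_univ_of_not_consistent (P := P) hi ▸ Set.subset_univ _)

/-- The immediate consequence operator `T P` as a monotone map on the lattice of sets of literals,
the form in which the library's fixed point theorems apply to it. -/
noncomputable def THom (P : Program α) : Set (Lit α) →o Set (Lit α) :=
  ⟨T P, monotone_T⟩

theorem ωScottContinuous_THom : OmegaCompletePartialOrder.ωScottContinuous (THom P) :=
  .of_map_ωSup_of_orderHom fun c => T_iUnion_of_directed c.monotone.directed_le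

theorem Cn_eq_lfp_THom : Cn P = (THom P).lfp :=
  congrArg sInf (Set.ext fun _ => T_subset_self_iff.symm)

theorem Cn_eq_iUnion_iterate_T : Cn P = ⋃ i : ℕ, (T P)^[i] ∅ :=
  Cn_eq_lfp_THom.trans (fixedPoints.lfp_eq_sSup_iterate _ ωScottContinuous_THom)

end ImmediateConsequence

theorem TE_eq_T_reduct (P : Program α) (Y : Set (Lit α)) : TE P Y = T (reduct P Y) := by
  funext X
  simp only [TE, T]
  congr 1
  ext L
  constructor
  · rintro ⟨r, hr, ⟨hbody, hneg⟩, rfl⟩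
    exact ⟨⟨r.head, r.pbody, ∅⟩, ⟨r, hr, hneg, rfl⟩, hbody, rfl⟩
  · rintro ⟨_, ⟨r, hr, hneg, rfl⟩, hbody, rfl⟩
    exact ⟨r, hr, ⟨hbody, hneg⟩, rfl⟩

theorem Cn_reduct_eq_iUnion_iterate_TE (P : Program α) (Y : Set (Lit α)) :
    Cn (reduct P Y) = ⋃ i : ℕ, (TE P Y)^[i] ∅ := by
  rw [TE_eq_T_reduct, Cn_eq_iUnion_iterate_T]

theorem answerSet_eq_iUnion_iterate_TE_general (P : Program α) (X : Set (Lit α)) :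
    AnswerSet P X ↔ X = ⋃ i : ℕ, (TE P X)^[i] ∅ := by
  rw [AnswerSet, Cn_reduct_eq_iUnion_iterate_TE, eq_comm]

/-- any answer set `X` of `Π` equals `⋃ i, T_{Π,X}^i(∅)`. -/
theorem answerSet_eq_iUnion_iterate_TE {α : Type} (P : Program α)
    (hfin : P.Finite) (X : Set (Lit α)) (hX : AnswerSet P X) :
    X = ⋃ i : ℕ, (TE P X)^[i] ∅ :=
  (answerSet_eq_iUnion_iterate_TE_general P X).mp hX
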